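/- arXiv:1711.09541 — 4 statements merged into one kernel-verified Lean document; each statement's English description precedes it below -/
import Mathlib

section
/- Let S and ΔS be real symmetric N×N matrices and let 1 ≤ k ≤ N. Let λ_1, …, λ_N denote the eigenvalues of S ordered so that |λ_1| ≥ |λ_2| ≥ … ≥ |λ_N|, and define the SVD minimum loss L(S,k) = Σ_{l=k+1}^N λ_l². Let μ_1 ≥ μ_2 ≥ … ≥ μ_k be the k largest eigenvalues of the symmetric matrix ∇ = S·ΔS + ΔS·S + ΔS·ΔS. Then L(S + ΔS, k) ≥ L(S,k) + tr((S+ΔS)·(S+ΔS)) − tr(S·S) − Σ_{l=1}^k μ_l. -/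
open Matrix

lemma aux_fan {N k : ℕ} (hk1 : 1 ≤ k) (hkN : k ≤ N) (V : Matrix (Fin N) (Fin N) ℝ)
    (h1 : V * Vᵀ = 1) (h2 : Vᵀ * V = 1) (a : Fin N → ℝ) (ha : Antitone a) :
    ∑ l ∈ Finset.univ.filter (fun l : Fin N => (l : ℕ) < k), (V * diagonal a * Vᵀ) l l ≤
      ∑ l ∈ Finset.univ.filter (fun l : Fin N => (l : ℕ) < k), a l := by
  have hrow : ∀ l, ∑ j, V l j ^ 2 = 1 := by
    intro l
    have := congrFun (congrFun h1 l) l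
    simp only [mul_apply, transpose_apply, one_apply_eq] at this
    simpa [sq] using this
  have hcol : ∀ j, ∑ l, V l j ^ 2 = 1 := by
    intro j
    have := congrFun (congrFun h2 j) j
    simp only [mul_apply, transpose_apply, one_apply_eq] at this
    simpa [sq] using this
  have hent : ∀ l, (V * diagonal a * Vᵀ) l l = ∑ j, V l j ^ 2 * a j := by
    intro l
    simp only [mul_apply (M := V * diagonal a), mul_diagonal, transpose_apply]
    exact Finset.sum_congr rfl fun j _ => by ring
  simp only [hent]
  set F := Finset.univ.filter (fun l : Fin N => (l : ℕ) < k) with hF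
  set c := a ⟨k - 1, by omega⟩ with hc
  have hp0 : ∀ j, 0 ≤ ∑ l ∈ F, V l j ^ 2 := fun j => Finset.sum_nonneg fun _ _ => sq_nonneg _
  have hp1 : ∀ j, ∑ l ∈ F, V l j ^ 2 ≤ 1 := fun j => by
    rw [← hcol j]
    exact Finset.sum_le_sum_of_subset_of_nonneg (Finset.subset_univ _)
      fun _ _ _ => sq_nonneg _
  have key : ∑ j, (∑ l ∈ F, V l j ^ 2) * (a j - c) ≤ ∑ j ∈ F, (a j - c) := by
    rw [hF, Finset.sum_filter, ← hF]
    refine Finset.sum_le_sum fun j _ => ?_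
    split_ifs with hj
    · have : c ≤ a j := ha (Fin.le_def.2 (by simp only; omega))
      nlinarith [hp1 j]
    · have : a j ≤ c := ha (Fin.le_def.2 (by simp only; omega))
      nlinarith [hp0 j]
  have e1 : ∑ j, (∑ l ∈ F, V l j ^ 2) * (a j - c)
      = ∑ l ∈ F, ∑ j, V l j ^ 2 * a j - ∑ l ∈ F, c := by
    simp only [Finset.sum_mul]
    rw [Finset.sum_comm, ← Finset.sum_sub_distrib]
    refine Finset.sum_congr rfl fun l _ => ?_
    simp only [mul_sub, Finset.sum_sub_distrib]
    rw [← Finset.sum_mul, hrow, one_mul]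
  rw [e1, Finset.sum_sub_distrib] at key
  linarith

lemma aux_sq {N : ℕ} (U : Matrix (Fin N) (Fin N) ℝ) (h : Uᵀ * U = 1) (a : Fin N → ℝ) :
    (U * diagonal a * Uᵀ) * (U * diagonal a * Uᵀ) = U * diagonal (fun l => a l ^ 2) * Uᵀ := by
  calc _ = U * diagonal a * (Uᵀ * U) * diagonal a * Uᵀ := by simp only [Matrix.mul_assoc]
    _ = U * (diagonal a * diagonal a) * Uᵀ := by rw [h, Matrix.mul_one]; simp only [Matrix.mul_assoc]
    _ = _ := by rw [diagonal_mul_diagonal]; simp only [sq]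

lemma aux_tr {N : ℕ} (U : Matrix (Fin N) (Fin N) ℝ) (h : Uᵀ * U = 1) (a : Fin N → ℝ) :
    (U * diagonal a * Uᵀ).trace = ∑ l, a l := by
  rw [Matrix.trace_mul_comm, ← Matrix.mul_assoc, h, Matrix.one_mul, trace_diagonal]

lemma aux_split {N k : ℕ} (f : Fin N → ℝ) :
    ∑ l, f l = ∑ l ∈ Finset.univ.filter (fun l : Fin N => (l : ℕ) < k), f l +
      ∑ l ∈ Finset.univ.filter (fun l : Fin N => k ≤ (l : ℕ)), f l := by
  rw [← Finset.sum_filter_add_sum_filter_not Finset.univ (fun l : Fin N => (l : ℕ) < k)]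
  simp only [not_lt]

lemma aux_conj {N k : ℕ} (hk1 : 1 ≤ k) (hkN : k ≤ N) (U W : Matrix (Fin N) (Fin N) ℝ)
    (hU : Uᵀ * U = 1) (hW : Wᵀ * W = 1) (a : Fin N → ℝ) (ha : Antitone a) :
    ∑ l ∈ Finset.univ.filter (fun l : Fin N => (l : ℕ) < k),
      (Wᵀ * (U * diagonal a * Uᵀ) * W) l l ≤
      ∑ l ∈ Finset.univ.filter (fun l : Fin N => (l : ℕ) < k), a l := by
  have hU' : U * Uᵀ = 1 := mul_eq_one_comm.1 hU
  have hW' : W * Wᵀ = 1 := mul_eq_one_comm.1 hW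
  have := aux_fan hk1 hkN (Wᵀ * U)
    (by rw [transpose_mul, transpose_transpose, Matrix.mul_assoc, ← Matrix.mul_assoc U, hU',
      Matrix.one_mul, hW])
    (by rw [transpose_mul, transpose_transpose, Matrix.mul_assoc, ← Matrix.mul_assoc W, hW',
      Matrix.one_mul, hU]) a ha
  simpa only [transpose_mul, transpose_transpose, Matrix.mul_assoc] using this

/-- lower bound of SVD minimum loss: for real symmetric `S`, `ΔS`
and `1 ≤ k ≤ N`, with `lam` the eigenvalues of `S` ordered by descending
absolute value, `lam'` the eigenvalues of `S + ΔS` ordered by descending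
absolute value, and `mu` the eigenvalues of `∇ = S·ΔS + ΔS·S + ΔS·ΔS` in
descending order (each given via an orthogonal spectral decomposition), we have
`L(S+ΔS,k) ≥ L(S,k) + tr((S+ΔS)·(S+ΔS)) − tr(S·S) − Σ_{l=1}^k mu l`,
where `L(·,k)` is the sum of the squares of all but the `k` largest-magnitude
eigenvalues. -/
theorem svd_min_loss_lower_bound
    {N k : ℕ} (hk1 : 1 ≤ k) (hkN : k ≤ N)
    (S ΔS : Matrix (Fin N) (Fin N) ℝ) (hS : S.IsSymm) (hΔS : ΔS.IsSymm)
    (lam : Fin N → ℝ) (U1 : Matrix (Fin N) (Fin N) ℝ)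
    (hU1 : U1ᵀ * U1 = 1) (hSdecomp : S = U1 * Matrix.diagonal lam * U1ᵀ)
    (hlam : Antitone fun l => |lam l|)
    (lam' : Fin N → ℝ) (U2 : Matrix (Fin N) (Fin N) ℝ)
    (hU2 : U2ᵀ * U2 = 1)
    (hSΔSdecomp : S + ΔS = U2 * Matrix.diagonal lam' * U2ᵀ)
    (hlam' : Antitone fun l => |lam' l|)
    (mu : Fin N → ℝ) (U3 : Matrix (Fin N) (Fin N) ℝ)
    (hU3 : U3ᵀ * U3 = 1)
    (hgrad : S * ΔS + ΔS * S + ΔS * ΔS = U3 * Matrix.diagonal mu * U3ᵀ)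
    (hmu : Antitone mu) :
    ∑ l ∈ Finset.univ.filter (fun l : Fin N => k ≤ (l : ℕ)), lam' l ^ 2 ≥
      (∑ l ∈ Finset.univ.filter (fun l : Fin N => k ≤ (l : ℕ)), lam l ^ 2) +
        (((S + ΔS) * (S + ΔS)).trace - (S * S).trace) -
        ∑ l ∈ Finset.univ.filter (fun l : Fin N => (l : ℕ) < k), mu l := by
  have hA : (S + ΔS) * (S + ΔS) = U2 * diagonal (fun l => lam' l ^ 2) * U2ᵀ := by
    rw [hSΔSdecomp, aux_sq U2 hU2]
  have hB : S * S = U1 * diagonal (fun l => lam l ^ 2) * U1ᵀ := by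
    rw [hSdecomp, aux_sq U1 hU1]
  have hsum : (S + ΔS) * (S + ΔS) = S * S + (S * ΔS + ΔS * S + ΔS * ΔS) := by
    noncomm_ring
  have a1 := aux_conj hk1 hkN U1 U2 hU1 hU2 (fun l => lam l ^ 2)
    (fun i j hij => sq_le_sq.2 (hlam hij))
  have a2 := aux_conj hk1 hkN U3 U2 hU3 hU2 mu hmu
  have hD : diagonal (fun l => lam' l ^ 2) = U2ᵀ * (U1 * diagonal (fun l => lam l ^ 2) * U1ᵀ) * U2
      + U2ᵀ * (U3 * diagonal mu * U3ᵀ) * U2 := by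
    rw [← hB, ← hgrad, ← Matrix.add_mul, ← Matrix.mul_add, ← hsum, hA]
    calc _ = (U2ᵀ * U2) * diagonal (fun l => lam' l ^ 2) * (U2ᵀ * U2) := by
          rw [hU2, Matrix.one_mul, Matrix.mul_one]
      _ = _ := by simp only [Matrix.mul_assoc]
  have hl : ∀ l, lam' l ^ 2 = (U2ᵀ * (U1 * diagonal (fun l => lam l ^ 2) * U1ᵀ) * U2) l l
      + (U2ᵀ * (U3 * diagonal mu * U3ᵀ) * U2) l l := by
    intro l
    have := congrFun (congrFun hD l) l
    rwa [diagonal_apply_eq, Matrix.add_apply] at this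
  have hk : ∑ l ∈ Finset.univ.filter (fun l : Fin N => (l : ℕ) < k), lam' l ^ 2 ≤
      ∑ l ∈ Finset.univ.filter (fun l : Fin N => (l : ℕ) < k), lam l ^ 2 +
      ∑ l ∈ Finset.univ.filter (fun l : Fin N => (l : ℕ) < k), mu l := by
    rw [Finset.sum_congr rfl fun l _ => hl l, Finset.sum_add_distrib]
    exact add_le_add a1 a2
  rw [hA, hB, aux_tr U2 hU2, aux_tr U1 hU1, aux_split (k := k) (fun l => lam' l ^ 2),
    aux_split (k := k) (fun l => lam l ^ 2)]
  linarith
end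

section
/- Let P and Q be real symmetric N×N matrices and 1 ≤ k ≤ N. Then the sum of the k largest eigenvalues of P + Q is at most the sum of the k largest eigenvalues of P plus the sum of the k largest eigenvalues of Q; that is, Λ^k(P+Q) ≤ Λ^k(P) + Λ^k(Q). -/
open Matrix

/-- Rearrangement bound for weights in `[0,1]` of total mass `k`. -/
lemma kf_weight {N k : ℕ} (hk1 : 1 ≤ k) (hkN : k ≤ N) (p c : Fin N → ℝ) (hp : Antitone p)
    (h0 : ∀ j, 0 ≤ c j) (h1 : ∀ j, c j ≤ 1) (hs : ∑ j, c j = k) :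
    ∑ j, c j * p j ≤ ∑ l ∈ Finset.univ.filter (fun l : Fin N => (l : ℕ) < k), p l := by
  let m : Fin N := ⟨k - 1, by omega⟩
  have key : ∑ j, c j * (p j - p m) ≤
      ∑ j : Fin N, (if (j : ℕ) < k then (p j - p m) else 0) := by
    apply Finset.sum_le_sum
    intro j _
    split_ifs with h
    · have : p m ≤ p j := hp (by rw [Fin.le_def]; simp only [m]; omega)
      nlinarith [h0 j, h1 j]
    · have : p j ≤ p m := hp (by rw [Fin.le_def]; simp only [m]; omega)
      nlinarith [h0 j, h1 j]
  have hcard : (Finset.univ.filter (fun l : Fin N => (l : ℕ) < k)).card = k := by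
    rw [Fin.card_filter_val_lt]; omega
  rw [← Finset.sum_filter] at key
  simp only [mul_sub, Finset.sum_sub_distrib, ← Finset.sum_mul, Finset.sum_const, hcard, hs,
    nsmul_eq_mul] at key
  linarith

/-- Trace of a compression is at most the sum of the top `k` eigenvalues. -/
lemma kf_trace {N k : ℕ} (hk1 : 1 ≤ k) (hkN : k ≤ N) (p : Fin N → ℝ) (hp : Antitone p)
    (U V : Matrix (Fin N) (Fin N) ℝ) (hU : Uᵀ * U = 1) (hV : Vᵀ * V = 1) :
    ∑ l ∈ Finset.univ.filter (fun l : Fin N => (l : ℕ) < k),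
      (Vᵀ * (U * Matrix.diagonal p * Uᵀ) * V) l l ≤
    ∑ l ∈ Finset.univ.filter (fun l : Fin N => (l : ℕ) < k), p l := by
  have hU' : U * Uᵀ = 1 := mul_eq_one_comm.mp hU
  have hV' : V * Vᵀ = 1 := mul_eq_one_comm.mp hV
  obtain ⟨W, hW⟩ : ∃ W, W = Vᵀ * U := ⟨_, rfl⟩
  have hW1 : W * Wᵀ = 1 := by
    rw [hW, transpose_mul, transpose_transpose, Matrix.mul_assoc, ← Matrix.mul_assoc U, hU',
      Matrix.one_mul, hV]
  have hW2 : Wᵀ * W = 1 := mul_eq_one_comm.mp hW1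
  have e : Vᵀ * (U * Matrix.diagonal p * Uᵀ) * V = W * Matrix.diagonal p * Wᵀ := by
    rw [hW, transpose_mul, transpose_transpose]; simp only [Matrix.mul_assoc]
  have row : ∀ l, ∑ j, W l j ^ 2 = 1 := fun l => by
    have := congrFun (congrFun hW1 l) l
    simpa [Matrix.mul_apply, pow_two] using this
  have col : ∀ j, ∑ l, W l j ^ 2 = 1 := fun j => by
    have := congrFun (congrFun hW2 j) j
    simpa [Matrix.mul_apply, pow_two] using this
  have d : ∀ l, (W * Matrix.diagonal p * Wᵀ) l l = ∑ j, W l j ^ 2 * p j := fun l => by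
    rw [Matrix.mul_apply]
    refine Finset.sum_congr rfl fun j _ => ?_
    rw [Matrix.mul_diagonal, Matrix.transpose_apply]; ring
  have hcard : (Finset.univ.filter (fun l : Fin N => (l : ℕ) < k)).card = k := by
    rw [Fin.card_filter_val_lt]; omega
  rw [e]
  simp only [d]
  rw [Finset.sum_comm]
  simp only [← Finset.sum_mul]
  refine kf_weight hk1 hkN p _ hp (fun j => Finset.sum_nonneg fun _ _ => sq_nonneg _)
    (fun j => ?_) ?_
  · rw [← col j]
    exact Finset.sum_le_sum_of_subset_of_nonneg (Finset.filter_subset _ _)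
      fun _ _ _ => sq_nonneg _
  · rw [Finset.sum_comm]
    simp [row, hcard]

/-- Ky Fan subadditivity: for real symmetric `P`, `Q` of size `N`
with `1 ≤ k ≤ N`, the sum of the `k` largest eigenvalues of `P + Q` is at most
the sum of the `k` largest eigenvalues of `P` plus that of `Q`. Eigenvalues in
descending order are given via orthogonal spectral decompositions with antitone
eigenvalue functions. -/
theorem ky_fan_top_k_eigenvalue_sum_subadditive
    {N k : ℕ} (hk1 : 1 ≤ k) (hkN : k ≤ N)
    (P Q : Matrix (Fin N) (Fin N) ℝ) (hP : P.IsSymm) (hQ : Q.IsSymm)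
    (p : Fin N → ℝ) (Up : Matrix (Fin N) (Fin N) ℝ)
    (hUp : Upᵀ * Up = 1) (hPdecomp : P = Up * Matrix.diagonal p * Upᵀ)
    (hp : Antitone p)
    (q : Fin N → ℝ) (Uq : Matrix (Fin N) (Fin N) ℝ)
    (hUq : Uqᵀ * Uq = 1) (hQdecomp : Q = Uq * Matrix.diagonal q * Uqᵀ)
    (hq : Antitone q)
    (r : Fin N → ℝ) (Ur : Matrix (Fin N) (Fin N) ℝ)
    (hUr : Urᵀ * Ur = 1) (hPQdecomp : P + Q = Ur * Matrix.diagonal r * Urᵀ)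
    (hr : Antitone r) :
    ∑ l ∈ Finset.univ.filter (fun l : Fin N => (l : ℕ) < k), r l ≤
      (∑ l ∈ Finset.univ.filter (fun l : Fin N => (l : ℕ) < k), p l) +
      ∑ l ∈ Finset.univ.filter (fun l : Fin N => (l : ℕ) < k), q l := by
  have hR : Urᵀ * (P + Q) * Ur = Matrix.diagonal r := by
    rw [hPQdecomp]
    calc _ = (Urᵀ * Ur) * Matrix.diagonal r * (Urᵀ * Ur) := by simp only [Matrix.mul_assoc]
      _ = _ := by rw [hUr, Matrix.one_mul, Matrix.mul_one]
  have hr' : ∀ l, r l = (Urᵀ * P * Ur) l l + (Urᵀ * Q * Ur) l l := fun l => by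
    rw [← Matrix.add_apply, ← Matrix.add_mul, ← Matrix.mul_add, hR, Matrix.diagonal_apply_eq]
  simp only [hr', Finset.sum_add_distrib]
  have h1 := kf_trace hk1 hkN p hp Up Ur hUp hUr
  have h2 := kf_trace hk1 hkN q hq Uq Ur hUq hUr
  rw [← hPdecomp] at h1
  rw [← hQdecomp] at h2
  exact add_le_add h1 h2
end

section
/- Let Q be a real symmetric N×N matrix and 1 ≤ k ≤ N. Then the sum of the k largest eigenvalues of Q equals the maximum of tr(Uᵀ·Q·U) over all real N×k matrices U with orthonormal columns (i.e., Uᵀ·U = I_k). -/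
open Matrix

/-- Ky Fan variational characterization: for a real symmetric
`N×N` matrix `Q` with eigenvalues `mu` in descending order (given via an
orthogonal spectral decomposition with `mu` antitone) and `1 ≤ k ≤ N`, the sum
of the `k` largest eigenvalues of `Q` is the maximum of `tr(Uᵀ·Q·U)` over all
real `N×k` matrices `U` with orthonormal columns (`Uᵀ·U = 1`). -/
theorem ky_fan_variational_top_k_eigenvalue_sum
    {N k : ℕ} (hk1 : 1 ≤ k) (hkN : k ≤ N)
    (Q : Matrix (Fin N) (Fin N) ℝ) (hQ : Q.IsSymm)
    (mu : Fin N → ℝ) (W : Matrix (Fin N) (Fin N) ℝ)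
    (hW : Wᵀ * W = 1) (hQdecomp : Q = W * Matrix.diagonal mu * Wᵀ)
    (hmu : Antitone mu) :
    IsGreatest
      {x : ℝ | ∃ U : Matrix (Fin N) (Fin k) ℝ, Uᵀ * U = 1 ∧ x = (Uᵀ * Q * U).trace}
      (∑ l ∈ Finset.univ.filter (fun l : Fin N => (l : ℕ) < k), mu l) := by
  have hW' : W * Wᵀ = 1 := mul_eq_one_comm.mp hW
  constructor
  · refine ⟨W.submatrix id (Fin.castLE hkN), ?_, ?_⟩
    · have h : (W.submatrix id (Fin.castLE hkN))ᵀ * W.submatrix id (Fin.castLE hkN)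
          = (Wᵀ * W).submatrix (Fin.castLE hkN) (Fin.castLE hkN) := by
        ext a b
        simp [Matrix.mul_apply]
      rw [h, hW, Matrix.submatrix_one _ (Fin.castLE_injective hkN)]
    · have h : (W.submatrix id (Fin.castLE hkN))ᵀ * Q * W.submatrix id (Fin.castLE hkN)
          = (Wᵀ * Q * W).submatrix (Fin.castLE hkN) (Fin.castLE hkN) := by
        ext a b
        simp [Matrix.mul_apply]
      have h2 : Wᵀ * Q * W = Matrix.diagonal mu := by
        calc Wᵀ * Q * W = (Wᵀ * W) * Matrix.diagonal mu * (Wᵀ * W) := by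
              rw [hQdecomp]; simp only [Matrix.mul_assoc]
          _ = _ := by rw [hW]; simp
      rw [h, h2]
      simp only [Matrix.trace, Matrix.diag, Matrix.submatrix_apply, Matrix.diagonal_apply_eq]
      symm
      refine Finset.sum_bij (fun a _ => Fin.castLE hkN a) ?_ ?_ ?_ ?_
      · intro a _; simp
      · intro a _ b _ hab; exact Fin.castLE_injective hkN hab
      · intro b hb
        simp only [Finset.mem_filter, Finset.mem_univ, true_and] at hb
        exact ⟨⟨b, hb⟩, Finset.mem_univ _, rfl⟩
      · intro a _; rfl
  · rintro x ⟨U, hU, rfl⟩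
    obtain ⟨V, hV⟩ : ∃ V, V = Wᵀ * U := ⟨_, rfl⟩
    have hVV : Vᵀ * V = 1 := by
      calc Vᵀ * V = Uᵀ * (W * Wᵀ) * U := by
            rw [hV, Matrix.transpose_mul, Matrix.transpose_transpose]
            simp only [Matrix.mul_assoc]
        _ = 1 := by rw [hW', Matrix.mul_one, hU]
    obtain ⟨P, hP⟩ : ∃ P, P = V * Vᵀ := ⟨_, rfl⟩
    have hPP : P * P = P := by
      calc P * P = V * (Vᵀ * V) * Vᵀ := by rw [hP]; simp only [Matrix.mul_assoc]
        _ = P := by rw [hVV, Matrix.mul_one, hP]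
    have hPs : Pᵀ = P := by rw [hP, Matrix.transpose_mul, Matrix.transpose_transpose]
    have htr : (Uᵀ * Q * U).trace = ∑ i, mu i * P i i := by
      calc (Uᵀ * Q * U).trace = (Vᵀ * (Matrix.diagonal mu * V)).trace := by
            rw [hV, Matrix.transpose_mul, Matrix.transpose_transpose, hQdecomp]
            simp only [Matrix.mul_assoc]
        _ = (Matrix.diagonal mu * P).trace := by
            rw [Matrix.trace_mul_comm, hP, Matrix.mul_assoc]
        _ = _ := by simp [Matrix.trace, Matrix.diagonal_mul]
    have hsum : ∑ i, P i i = k := by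
      have : P.trace = k := by
        rw [hP, Matrix.trace_mul_comm, hVV]; simp
      simpa [Matrix.trace] using this
    have hsq : ∀ i, P i i = ∑ j, P i j ^ 2 := by
      intro i
      have h := congrFun (congrFun hPP i) i
      rw [Matrix.mul_apply] at h
      rw [← h]
      refine Finset.sum_congr rfl fun j _ => ?_
      have h3 : P j i = P i j := congrFun (congrFun hPs i) j
      rw [h3, sq]
    have h0 : ∀ i, 0 ≤ P i i := fun i => by
      rw [hsq i]; positivity
    have h1 : ∀ i, P i i ≤ 1 := fun i => by
      have h : P i i ^ 2 ≤ ∑ j, P i j ^ 2 :=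
        Finset.single_le_sum (f := fun j => P i j ^ 2) (fun j _ => sq_nonneg _)
          (Finset.mem_univ i)
      rw [← hsq i] at h
      nlinarith [h0 i]
    have hcard : ∑ i : Fin N, (if (i : ℕ) < k then (1 : ℝ) else 0) = k := by
      rw [Finset.sum_boole, Fin.card_filter_val_lt, min_eq_right hkN]
    rw [htr, Finset.sum_filter]
    obtain ⟨c, hc⟩ : ∃ c, c = mu ⟨k - 1, by omega⟩ := ⟨_, rfl⟩
    have key : ∀ i : Fin N, mu i * P i i - (if (i : ℕ) < k then mu i else 0)
        ≤ c * P i i - c * (if (i : ℕ) < k then (1 : ℝ) else 0) := by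
      intro i
      split_ifs with hi
      · have : c ≤ mu i := by
          rw [hc]; apply hmu; rw [Fin.le_def]; simp only; omega
        nlinarith [h1 i]
      · have : mu i ≤ c := by
          rw [hc]; apply hmu; rw [Fin.le_def]; simp only; omega
        nlinarith [h0 i]
    have hfin := Finset.sum_le_sum fun i (_ : i ∈ Finset.univ) => key i
    rw [Finset.sum_sub_distrib, Finset.sum_sub_distrib, ← Finset.mul_sum, ← Finset.mul_sum,
      hsum, hcard] at hfin
    linarith
end

section
/- Let S be a real symmetric N×N matrix with eigenvalues λ_1, …, λ_N ordered so that |λ_1| ≥ … ≥ |λ_N|, let 1 ≤ k ≤ N, and let M be any real N×N matrix of rank at most k. Then ‖S − M‖_F² ≥ Σ_{l=k+1}^N λ_l², where ‖·‖_F denotes the Frobenius norm. -/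
open Matrix

lemma ey_weights {N k : ℕ} (hkN : k ≤ N) (a q : Fin N → ℝ) (ha : Antitone a) (ha0 : ∀ j, 0 ≤ a j)
    (hq0 : ∀ j, 0 ≤ q j) (hq1 : ∀ j, q j ≤ 1) (hq : (N : ℝ) - k ≤ ∑ j, q j) :
    ∑ l ∈ Finset.univ.filter (fun l : Fin N => k ≤ (l : ℕ)), a l ≤ ∑ j, a j * q j := by
  rcases hkN.lt_or_eq with h | h
  · set t := a ⟨k, h⟩
    have key : ∀ j : Fin N, t * (q j - if k ≤ (j : ℕ) then 1 else 0) ≤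
        a j * q j - if k ≤ (j : ℕ) then a j else 0 := by
      intro j
      split_ifs with hj
      · have : a j ≤ t := ha (Fin.mk_le_of_le_val hj)
        nlinarith [hq1 j]
      · have : t ≤ a j := ha (Fin.le_def.2 (by simpa using (not_le.1 hj).le))
        nlinarith [hq0 j]
    have h1 := Finset.sum_le_sum (fun j (_ : j ∈ Finset.univ) => key j)
    rw [← Finset.mul_sum, Finset.sum_sub_distrib, Finset.sum_sub_distrib, ← Finset.sum_filter,
      ← Finset.sum_filter] at h1
    have hc : ∑ l ∈ Finset.univ.filter (fun l : Fin N => k ≤ (l : ℕ)), (1 : ℝ) = (N : ℝ) - k := by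
      have : (Finset.univ.filter (fun l : Fin N => k ≤ (l : ℕ))) = Finset.Ici ⟨k, h⟩ := by
        ext l; simp [Fin.le_def]
      rw [this]
      simp [Nat.cast_sub hkN]
    rw [hc] at h1
    have := mul_nonneg (ha0 ⟨k, h⟩) (sub_nonneg.2 hq)
    linarith
  · rw [Finset.filter_false_of_mem]
    · simpa using Finset.sum_nonneg fun j _ => mul_nonneg (ha0 j) (hq0 j)
    · intro l _; have := l.2; omega

lemma ey_frob {N : ℕ} (A : Matrix (Fin N) (Fin N) ℝ) :
    ∑ i, ∑ j, A i j ^ 2 = (Aᵀ * A).trace := by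
  rw [Finset.sum_comm]
  simp [Matrix.trace, Matrix.mul_apply, sq]

lemma ey_diag {N k : ℕ} (hkN : k ≤ N) (lam : Fin N → ℝ) (hlam : Antitone fun l => |lam l|)
    (M : Matrix (Fin N) (Fin N) ℝ) (hM : M.rank ≤ k) :
    ∑ l ∈ Finset.univ.filter (fun l : Fin N => k ≤ (l : ℕ)), lam l ^ 2 ≤
      ∑ i : Fin N, ∑ j : Fin N, (Matrix.diagonal lam - M) i j ^ 2 := by
  set W : Submodule ℝ (EuclideanSpace ℝ (Fin N)) := LinearMap.range (Matrix.toEuclideanLin M)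
  have hW : Module.finrank ℝ W ≤ k := by
    rw [Matrix.rank_eq_finrank_range_toLin M (EuclideanSpace.basisFun (Fin N) ℝ).toBasis
      (EuclideanSpace.basisFun (Fin N) ℝ).toBasis, ← Matrix.toEuclideanLin_eq_toLin_orthonormal] at hM
    exact hM
  have hsum := W.finrank_add_finrank_orthogonal
  rw [finrank_euclideanSpace_fin] at hsum
  let b := stdOrthonormalBasis ℝ Wᗮ
  let v : Fin (Module.finrank ℝ Wᗮ) → EuclideanSpace ℝ (Fin N) := fun i => (b i : _)
  have hv : Orthonormal ℝ v := b.orthonormal.comp_linearIsometry Wᗮ.subtypeₗᵢ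
  have hvW : ∀ i, ∀ w ∈ W, inner ℝ (v i) w = 0 := fun i w hw =>
    Submodule.inner_left_of_mem_orthogonal hw (b i).2
  let e : Fin N → EuclideanSpace ℝ (Fin N) := fun j => EuclideanSpace.single j 1
  have hve : ∀ i j, inner ℝ (v i) (e j) = v i j := by
    intro i j; simp [e, EuclideanSpace.inner_single_right]
  have bessel : ∀ x, ∑ i, (inner ℝ (v i) x) ^ 2 ≤ ‖x‖ ^ 2 := by
    intro x
    have := hv.sum_inner_products_le x (s := Finset.univ)
    simpa using this
  refine (ey_weights hkN (fun j => lam j ^ 2) (fun j => ∑ i, v i j ^ 2) ?_ (fun j => sq_nonneg _)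
    (fun j => Finset.sum_nonneg fun i _ => sq_nonneg _) ?_ ?_).trans ?_
  · intro i j hij
    exact sq_le_sq.2 (hlam hij)
  · intro j
    have := bessel (e j)
    simpa [hve, e] using this
  · rw [Finset.sum_comm]
    have : ∀ i, ∑ j, v i j ^ 2 = 1 := by
      intro i
      have := hv.1 i
      have h2 := EuclideanSpace.real_norm_sq_eq (v i)
      rw [← h2, this]; norm_num
    simp only [this]
    simp only [Finset.sum_const, Finset.card_univ, Fintype.card_fin, nsmul_eq_mul, mul_one]
    have : (N : ℝ) ≤ k + Module.finrank ℝ Wᗮ := by exact_mod_cast (by omega)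
    linarith
  · rw [Finset.sum_comm (f := fun i j => (Matrix.diagonal lam - M) i j ^ 2)]
    refine Finset.sum_le_sum fun j _ => ?_
    have h := bessel (lam j • e j - Matrix.toEuclideanLin M (e j))
    rw [EuclideanSpace.real_norm_sq_eq] at h
    have h1 : ∀ i, inner ℝ (v i) (lam j • e j - Matrix.toEuclideanLin M (e j)) = lam j * v i j := by
      intro i
      rw [inner_sub_right, hvW i _ (LinearMap.mem_range_self _ _), inner_smul_right, hve, sub_zero]
    have h2 : ∀ i, (lam j • e j - Matrix.toEuclideanLin M (e j)) i =
        (Matrix.diagonal lam - M) i j := by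
      intro i
      by_cases hij : i = j
      · subst hij; simp [e, Matrix.toLpLin_apply]
      · simp [e, Matrix.toLpLin_apply, hij]
    simp only [h1, h2, mul_pow, ← Finset.mul_sum] at h
    exact h

/-- Eckart–Young lower bound: for a real symmetric `S` with
eigenvalues `lam` ordered by descending absolute value, `1 ≤ k ≤ N`, and any
real `N×N` matrix `M` of rank at most `k`, the squared Frobenius norm
`‖S − M‖_F²` is at least `Σ_{l=k+1}^N lam l ^ 2`. -/
theorem eckart_young_lower_bound
    {N k : ℕ} (hk1 : 1 ≤ k) (hkN : k ≤ N)
    (S : Matrix (Fin N) (Fin N) ℝ) (hS : S.IsSymm)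
    (lam : Fin N → ℝ) (U : Matrix (Fin N) (Fin N) ℝ)
    (hU : Uᵀ * U = 1) (hSdecomp : S = U * Matrix.diagonal lam * Uᵀ)
    (hlam : Antitone fun l => |lam l|)
    (M : Matrix (Fin N) (Fin N) ℝ) (hM : M.rank ≤ k) :
    ∑ l ∈ Finset.univ.filter (fun l : Fin N => k ≤ (l : ℕ)), lam l ^ 2 ≤
      ∑ i : Fin N, ∑ j : Fin N, (S - M) i j ^ 2 := by
  have hU' : U * Uᵀ = 1 := mul_eq_one_comm.1 hU
  have hr : (Uᵀ * M * U).rank ≤ k :=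
    ((Matrix.rank_mul_le_left _ _).trans (Matrix.rank_mul_le_right _ _)).trans hM
  refine (ey_diag hkN lam hlam _ hr).trans_eq ?_
  have hD : Matrix.diagonal lam - Uᵀ * M * U = Uᵀ * (S - M) * U := by
    rw [hSdecomp, mul_sub, sub_mul]
    congr 1
    calc Matrix.diagonal lam = (Uᵀ * U) * Matrix.diagonal lam * (Uᵀ * U) := by simp [hU]
      _ = _ := by simp only [Matrix.mul_assoc]
  rw [ey_frob, ey_frob, hD]
  generalize S - M = A
  have : (Uᵀ * A * U)ᵀ * (Uᵀ * A * U) = Uᵀ * (Aᵀ * (U * Uᵀ) * A * U) := by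
    simp only [Matrix.transpose_mul, Matrix.transpose_transpose, Matrix.mul_assoc]
  rw [this, hU', Matrix.mul_one, Matrix.trace_mul_comm, Matrix.mul_assoc, hU', Matrix.mul_one]
end
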